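/- arXiv:1907.01210 — 2 statements merged into one kernel-verified Lean document; each statement's English description precedes it below -/
import Mathlib

section
/- If m ≡ 3 (mod 4) and m, n ≥ 3, then γ_p(f_{n×m}) = 2·⌈(3nm - 5n)/12⌉. -/
abbrev FlowerVert (n m : ℕ) := ZMod n ⊕ ZMod n × Fin (m - 2)

def flowerRel (n m : ℕ) : FlowerVert n m → FlowerVert n m → Prop
  | Sum.inl i, Sum.inl i' => i' = i + 1
  | Sum.inl i, Sum.inr (i', j) => (i' = i ∧ j.val = 0) ∨ (i = i' + 1 ∧ j.val = m - 3)
  | Sum.inr (i, j), Sum.inr (i', j') => i' = i ∧ j'.val = j.val + 1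
  | _, _ => False

/-- The flower graph `f_{n×m}`. -/
def flowerGraph (n m : ℕ) : SimpleGraph (FlowerVert n m) :=
  SimpleGraph.fromRel (flowerRel n m)

/-- `D` is a paired dominating set of `G`. -/
def IsPairedDominating {V : Type*} (G : SimpleGraph V) (D : Set V) : Prop :=
  (∀ v ∉ D, ∃ u ∈ D, G.Adj u v) ∧
  ∃ M : G.Subgraph, M.verts = D ∧ M.IsMatching

/-- `D` is a `k`-distance paired dominating set of `G`. -/
def IsKDistPairedDominating {V : Type*} (G : SimpleGraph V) (k : ℕ) (D : Set V) : Prop :=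
  (∀ v ∉ D, ∃ u ∈ D, G.edist u v ≤ k) ∧
  ∃ M : G.Subgraph, M.verts = D ∧ M.IsMatching

/-- The paired domination number `γ_p(G)`. -/
noncomputable def pairedDomNum {V : Type*} (G : SimpleGraph V) : ℕ :=
  sInf {c | ∃ D : Set V, IsPairedDominating G D ∧ D.ncard = c}

/-- The `k`-distance paired domination number `γ_p^k(G)`. -/
noncomputable def kDistPairedDomNum {V : Type*} (G : SimpleGraph V) (k : ℕ) : ℕ :=
  sInf {c | ∃ D : Set V, IsKDistPairedDominating G k D ∧ D.ncard = c}

/-- The `k`-distance domination number `γ^k(G)`. -/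
noncomputable def kDistDomNum {V : Type*} (G : SimpleGraph V) (k : ℕ) : ℕ :=
  sInf {c | ∃ D : Set V, (∀ v ∉ D, ∃ u ∈ D, G.edist u v ≤ k) ∧ D.ncard = c}

theorem flower_adj_uu {n k : ℕ} (i j : ZMod n) :
    (flowerGraph n (4*k+3)).Adj (Sum.inl i) (Sum.inl j) ↔ i ≠ j ∧ (j = i + 1 ∨ i = j + 1) := by
  simp [flowerGraph, SimpleGraph.fromRel_adj, flowerRel]

theorem flower_adj_uv {n k : ℕ} (i j : ZMod n) (x : Fin (4*k+1)) :
    (flowerGraph n (4*k+3)).Adj (Sum.inl i) (Sum.inr (j, x)) ↔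
      ((j = i ∧ x.val = 0) ∨ (i = j + 1 ∧ x.val = 4*k)) := by
  simp only [flowerGraph, SimpleGraph.fromRel_adj, flowerRel, or_false]
  exact ⟨fun h => h.2, fun h => ⟨Sum.inl_ne_inr, h⟩⟩

theorem flower_adj_vv {n k : ℕ} (i j : ZMod n) (x y : Fin (4*k+1)) :
    (flowerGraph n (4*k+3)).Adj (Sum.inr (i, x)) (Sum.inr (j, y)) ↔
      (j = i ∧ (y.val = x.val + 1 ∨ x.val = y.val + 1)) := by
  simp only [flowerGraph, SimpleGraph.fromRel_adj, flowerRel]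
  constructor
  · rintro ⟨_, ⟨h1, h2⟩ | ⟨h1, h2⟩⟩
    · exact ⟨h1, Or.inl h2⟩
    · exact ⟨h1.symm, Or.inr h2⟩
  · rintro ⟨h1, h2⟩
    refine ⟨?_, ?_⟩
    · intro h
      simp only [Sum.inr.injEq, Prod.mk.injEq] at h
      have := congrArg Fin.val h.2
      omega
    · rcases h2 with h2 | h2
      · exact Or.inl ⟨h1, h2⟩
      · exact Or.inr ⟨h1.symm, h2⟩

theorem card_two_B (A B : Finset ℕ) (hB : ∀ x ∈ B, x ∈ A ∧ x + 1 ∈ A)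
    (hd : ∀ x ∈ B, x + 1 ∉ B) : 2 * B.card ≤ A.card := by
  have h1 : Disjoint B (B.image (· + 1)) := by
    rw [Finset.disjoint_left]
    intro x hx hx'
    obtain ⟨y, hy, rfl⟩ := Finset.mem_image.1 hx'
    exact hd y hy hx
  have h2 : (B.image (· + 1)).card = B.card :=
    Finset.card_image_of_injective _ (add_left_injective 1)
  have h3 : B ∪ B.image (· + 1) ⊆ A := by
    intro x hx
    rcases Finset.mem_union.1 hx with hx | hx
    · exact (hB x hx).1
    · obtain ⟨y, hy, rfl⟩ := Finset.mem_image.1 hx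
      exact (hB y hy).2
  have := Finset.card_le_card h3
  rw [Finset.card_union_of_disjoint h1, h2] at this
  omega

theorem card_two_B' (A B : Finset ℕ) (hB : ∀ x ∈ B, x ∈ A ∧ x + 1 ∈ A)
    (hd : ∀ x ∈ B, x + 1 ∉ B) (e : ℕ) (he : e ∈ A) (heB : e ∉ B) (heB' : ∀ x ∈ B, x + 1 ≠ e) :
    2 * B.card + 1 ≤ A.card := by
  have := card_two_B (A.erase e) B (by
    intro x hx
    refine ⟨Finset.mem_erase.2 ⟨?_, (hB x hx).1⟩, Finset.mem_erase.2 ⟨heB' x hx, (hB x hx).2⟩⟩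
    rintro rfl; exact heB hx) hd
  rw [Finset.card_erase_of_mem he] at this
  have : 0 < A.card := Finset.card_pos.2 ⟨e, he⟩
  omega

theorem cover_card (L : ℕ) (B E : Finset ℕ)
    (h : ∀ x < L, (∃ z ∈ B, x + 1 = z ∨ x = z ∨ x = z + 1 ∨ x = z + 2) ∨ x ∈ E) :
    L ≤ 4 * B.card + E.card := by
  have hs : Finset.range L ⊆
      (B.image (· - 1) ∪ (B ∪ (B.image (· + 1) ∪ B.image (· + 2)))) ∪ E := by
    intro x hx
    simp only [Finset.mem_union, Finset.mem_image]
    rcases h x (Finset.mem_range.1 hx) with ⟨z, hz, h1 | h1 | h1 | h1⟩ | h1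
    · left; left; exact ⟨z, hz, by omega⟩
    · left; right; left; exact h1 ▸ hz
    · left; right; right; left; exact ⟨z, hz, h1.symm⟩
    · left; right; right; right; exact ⟨z, hz, h1.symm⟩
    · right; exact h1
  have h0 := Finset.card_le_card hs
  rw [Finset.card_range] at h0
  have h1 := Finset.card_union_le (B.image (· - 1) ∪ (B ∪ (B.image (· + 1) ∪ B.image (· + 2)))) E
  have h2 := Finset.card_union_le (B.image (· - 1)) (B ∪ (B.image (· + 1) ∪ B.image (· + 2)))
  have h3 := Finset.card_union_le B (B.image (· + 1) ∪ B.image (· + 2))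
  have h4 := Finset.card_union_le (B.image (· + 1)) (B.image (· + 2))
  have h5 := Finset.card_image_le (s := B) (f := (· - 1))
  have h6 := Finset.card_image_le (s := B) (f := (· + 1))
  have h7 := Finset.card_image_le (s := B) (f := (· + 2))
  omega

open Classical in
theorem petal_bound {n k : ℕ} (M : (flowerGraph n (4*k+3)).Subgraph) (hM : M.IsMatching)
    (hdom : ∀ v ∉ M.verts, ∃ u ∈ M.verts, (flowerGraph n (4*k+3)).Adj u v) (i : ZMod n) :
    let a := (Finset.univ.filter (fun j : Fin (4*k+1) => Sum.inr (i, j) ∈ M.verts)).card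
    2 * k ≤ a ∧
    ((Sum.inl i ∉ M.verts ∧ Sum.inl (i+1) ∉ M.verts) → 2 * k + 1 ≤ a) ∧
    ((∃ (j : ZMod n) (x : Fin (4*k+1)), M.Adj (Sum.inl j) (Sum.inr (i, x))) → 2 * k + 1 ≤ a) := by
  intro a
  set F := Finset.univ.filter (fun j : Fin (4*k+1) => Sum.inr (i, j) ∈ M.verts) with hF
  set A : Finset ℕ := F.image Fin.val with hA
  have hAc : A.card = a := Finset.card_image_of_injective _ Fin.val_injective
  set B : Finset ℕ := (Finset.range (4*k+1)).filter
    (fun x => ∃ (h : x < 4*k+1) (h' : x+1 < 4*k+1),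
      M.Adj (Sum.inr (i, ⟨x, h⟩)) (Sum.inr (i, ⟨x+1, h'⟩))) with hBdef
  have memB : ∀ x, x ∈ B ↔ ∃ (h : x < 4*k+1) (h' : x+1 < 4*k+1),
      M.Adj (Sum.inr (i, ⟨x, h⟩)) (Sum.inr (i, ⟨x+1, h'⟩)) := by
    intro x
    simp only [hBdef, Finset.mem_filter, Finset.mem_range]
    exact ⟨fun h => h.2, fun h => ⟨h.1, h⟩⟩
  have memA : ∀ x (h : x < 4*k+1), Sum.inr (i, ⟨x, h⟩) ∈ M.verts → x ∈ A := by
    intro x h hx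
    exact Finset.mem_image.2 ⟨⟨x, h⟩, by simpa [hF] using hx, rfl⟩
  have hB : ∀ x ∈ B, x ∈ A ∧ x + 1 ∈ A := by
    intro x hx
    obtain ⟨h, h', hadj⟩ := (memB x).1 hx
    exact ⟨memA _ h hadj.fst_mem, memA _ h' hadj.snd_mem⟩
  have hd : ∀ x ∈ B, x + 1 ∉ B := by
    intro x hx hx'
    obtain ⟨h, h', hadj⟩ := (memB x).1 hx
    obtain ⟨g, g', hadj'⟩ := (memB _).1 hx'
    have := hM.eq_of_adj_left hadj.symm hadj'
    simp at this
    omega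
  -- members of D
  have key : ∀ y (h : y < 4*k+1), Sum.inr (i, ⟨y, h⟩) ∈ M.verts →
      (y ∈ B ∨ (∃ z ∈ B, y = z + 1) ∨ (y = 0 ∧ Sum.inl i ∈ M.verts) ∨
        (y = 4*k ∧ Sum.inl (i+1) ∈ M.verts)) := by
    intro y h hy
    obtain ⟨w, hw, -⟩ := hM hy
    rcases w with j | ⟨j, x⟩
    · have h1 := hw.adj_sub.symm
      rw [flower_adj_uv] at h1
      rcases h1 with ⟨h1, h2⟩ | ⟨h1, h2⟩
      · right; right; left; subst h1; exact ⟨h2, hw.snd_mem⟩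
      · right; right; right; subst h1; exact ⟨h2, hw.snd_mem⟩
    · have h1 := hw.adj_sub
      rw [flower_adj_vv] at h1
      obtain ⟨x, hx⟩ := x
      obtain ⟨rfl, h1 | h1⟩ := h1
      · left
        simp only at h1
        subst h1
        exact (memB _).2 ⟨h, hx, hw⟩
      · right; left
        simp only at h1
        subst h1
        exact ⟨x, (memB _).2 ⟨hx, h, hw.symm⟩, rfl⟩
  have cov : ∀ x < 4*k+1, (∃ z ∈ B, x + 1 = z ∨ x = z ∨ x = z + 1 ∨ x = z + 2) ∨
      ((x = 0 ∨ x = 1) ∧ Sum.inl i ∈ M.verts) ∨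
      ((x = 4*k ∨ x + 1 = 4*k) ∧ Sum.inl (i+1) ∈ M.verts) := by
    intro x h
    by_cases hx : Sum.inr (i, ⟨x, h⟩) ∈ M.verts
    · rcases key x h hx with h1 | ⟨z, h1, h2⟩ | h1 | h1
      · exact Or.inl ⟨x, h1, by omega⟩
      · exact Or.inl ⟨z, h1, by omega⟩
      · exact Or.inr (Or.inl ⟨Or.inl h1.1, h1.2⟩)
      · exact Or.inr (Or.inr ⟨Or.inl h1.1, h1.2⟩)
    · obtain ⟨w, hw, hadj⟩ := hdom _ hx
      rcases w with j | ⟨j, y⟩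
      · rw [flower_adj_uv] at hadj
        rcases hadj with ⟨h1, h2⟩ | ⟨h1, h2⟩
        · subst h1; exact Or.inr (Or.inl ⟨Or.inl h2, hw⟩)
        · subst h1; exact Or.inr (Or.inr ⟨Or.inl h2, hw⟩)
      · rw [flower_adj_vv] at hadj
        obtain ⟨y, hy⟩ := y
        obtain ⟨rfl, h1⟩ := hadj
        simp only at h1
        rcases key y hy hw with h2 | ⟨z, h2, h3⟩ | h2 | h2
        · exact Or.inl ⟨y, h2, by omega⟩
        · exact Or.inl ⟨z, h2, by omega⟩
        · exact Or.inr (Or.inl ⟨by omega, h2.2⟩)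
        · exact Or.inr (Or.inr ⟨by omega, h2.2⟩)
  have hkB : k ≤ B.card := by
    have h1 := cover_card (4*k+1) B {0, 1, 4*k, 4*k-1} (by
      intro x hx
      rcases cov x hx with h1 | h1 | h1
      · exact Or.inl h1
      · right; simp only [Finset.mem_insert, Finset.mem_singleton]; omega
      · right; simp only [Finset.mem_insert, Finset.mem_singleton]; omega)
    have h2 : ({0, 1, 4*k, 4*k-1} : Finset ℕ).card ≤ 4 := Finset.card_le_four
    omega
  have h2B := card_two_B A B hB hd
  refine ⟨by omega, ?_, ?_⟩
  · rintro ⟨hu, hu'⟩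
    have h1 := cover_card (4*k+1) B ∅ (by
      intro x hx
      rcases cov x hx with h1 | h1 | h1
      · exact Or.inl h1
      · exact absurd h1.2 hu
      · exact absurd h1.2 hu')
    simp only [Finset.card_empty] at h1
    omega
  · rintro ⟨j, ⟨x, hx⟩, hadj⟩
    have := card_two_B' A B hB hd x (memA x hx hadj.snd_mem) (by
      intro hxB
      obtain ⟨h, h', hadj'⟩ := (memB x).1 hxB
      have := hM.eq_of_adj_left hadj.symm hadj'
      simp at this) (by
      intro y hyB hyx
      subst hyx
      obtain ⟨h, h', hadj'⟩ := (memB y).1 hyB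
      have := hM.eq_of_adj_left hadj.symm hadj'.symm
      simp at this)
    omega

open Classical in
theorem flower_lower {n k : ℕ} (hn : 3 ≤ n) (D : Set (FlowerVert n (4*k+3)))
    (hD : IsPairedDominating (flowerGraph n (4*k+3)) D) :
    2 * (k * n + (n + 2) / 3) ≤ D.ncard := by
  obtain ⟨hdom, M, rfl, hM⟩ := hD
  have : NeZero n := ⟨by omega⟩
  have heven : Even M.verts.ncard := by
    have := hM.even_card
    rwa [← Set.ncard_eq_toFinset_card'] at this
  let a : ZMod n → ℕ := fun i =>
    (Finset.univ.filter (fun j : Fin (4*k+1) => Sum.inr (i, j) ∈ M.verts)).card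
  let fw : ZMod n → Prop := fun i => M.Adj (Sum.inl i) (Sum.inl (i+1)) ∨
    M.Adj (Sum.inl i) (Sum.inr (i, (0 : Fin (4*k+1))))
  let g1 : ZMod n → ℕ := fun i => if fw i then 1 else if Sum.inl i ∈ M.verts then 2 else 0
  let g2 : ZMod n → ℕ := fun i => if fw i then 2 else if Sum.inl i ∈ M.verts then 1 else 0
  have fw_mem : ∀ i, fw i → Sum.inl i ∈ M.verts := by
    rintro i (h | h)
    · exact h.fst_mem
    · exact h.fst_mem
  have hcard : M.verts.ncard = ∑ i, (if Sum.inl i ∈ M.verts then 1 else 0) + ∑ i, a i := by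
    rw [Set.ncard_eq_toFinset_card']
    have : M.verts.toFinset = Finset.univ.filter (· ∈ M.verts) := by ext; simp
    rw [this, Finset.card_filter, Fintype.sum_sum_type, Fintype.sum_prod_type]
    congr 1
    refine Finset.sum_congr rfl fun i _ => ?_
    simp only [a, Finset.card_filter]
    rfl
  have hg : ∀ i, g1 i + g2 i = 3 * (if Sum.inl i ∈ M.verts then 1 else 0) := by
    intro i
    simp only [g1, g2]
    by_cases h : fw i
    · simp [h, fw_mem i h]
    · by_cases h' : Sum.inl i ∈ M.verts <;> simp [h, h']
  have hpet : ∀ i, 6 * k + 2 ≤ 3 * a i + g1 i + g2 (i+1) := by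
    intro i
    obtain ⟨h1, h2, h3⟩ := petal_bound M hM hdom i
    change 2 * k ≤ a i at h1
    change _ → 2 * k + 1 ≤ a i at h2
    change _ → 2 * k + 1 ≤ a i at h3
    by_cases hs : 2 * k + 1 ≤ a i
    · omega
    have h2' := fun h => hs (h2 h)
    have h3' := fun h => hs (h3 h)
    suffices 2 ≤ g1 i + g2 (i+1) by omega
    by_cases hii : M.Adj (Sum.inl i) (Sum.inl (i+1))
    · have e1 : fw i := Or.inl hii
      have e2 : Sum.inl (i+1) ∈ M.verts := hii.snd_mem
      simp only [g1, g2, e1, e2, if_true]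
      split_ifs <;> omega
    have e1 : ¬ fw i := by
      rintro (h | h)
      · exact hii h
      · exact h3' ⟨_, _, h⟩
    by_cases hi : Sum.inl i ∈ M.verts
    · simp only [g1, e1, hi, if_true, if_false]; omega
    have hi' : Sum.inl (i+1) ∈ M.verts := by
      by_contra h; exact h2' ⟨hi, h⟩
    have e2 : fw (i+1) := by
      obtain ⟨w, hw, -⟩ := hM hi'
      rcases w with j | ⟨j, x⟩
      · have h5 := hw.adj_sub
        rw [flower_adj_uu] at h5
        rcases h5 with ⟨_, h5 | h5⟩
        · subst h5; exact Or.inl hw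
        · have : i = j := add_right_cancel h5
          subst this
          exact absurd hw.symm hii
      · have h5 := hw.adj_sub
        rw [flower_adj_uv] at h5
        rcases h5 with ⟨h5, h6⟩ | ⟨h5, h6⟩
        · subst h5
          have : x = (0 : Fin (4*k+1)) := Fin.ext h6
          subst this
          exact Or.inr hw
        · have : i = j := add_right_cancel h5
          subst this
          exact absurd ⟨_, _, hw⟩ h3'
    simp only [g2, e2, if_true]; omega
  have hsum : ∑ i : ZMod n, (6 * k + 2) ≤ ∑ i, (3 * a i + g1 i + g2 (i+1)) :=
    Finset.sum_le_sum fun i _ => hpet i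
  have hshift : ∑ i, g2 (i+1) = ∑ i, g2 i := Equiv.sum_comp (Equiv.addRight (1 : ZMod n)) g2
  have hgs : ∑ i, g1 i + ∑ i, g2 i = 3 * ∑ i : ZMod n, (if Sum.inl i ∈ M.verts then 1 else 0) := by
    rw [← Finset.sum_add_distrib, Finset.mul_sum]
    exact Finset.sum_congr rfl fun i _ => hg i
  have hconst : ∑ i : ZMod n, (6 * k + 2) = n * (6 * k + 2) := by
    rw [Finset.sum_const, Finset.card_univ, ZMod.card, smul_eq_mul]
  have hsplit : ∑ i, (3 * a i + g1 i + g2 (i+1)) = 3 * ∑ i, a i + ∑ i, g1 i + ∑ i, g2 i := by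
    rw [Finset.sum_add_distrib, Finset.sum_add_distrib, hshift, ← Finset.mul_sum]
  rw [hconst, hsplit] at hsum
  obtain ⟨p, hp⟩ := heven
  have h9 : n * (6 * k + 2) = 6 * (k * n) + 2 * n := by ring
  omega

theorem flower_upper {n k : ℕ} (hn : 3 ≤ n) :
    ∃ D : Set (FlowerVert n (4*k+3)), IsPairedDominating (flowerGraph n (4*k+3)) D ∧
      D.ncard ≤ 2 * (k * n + (n + 2) / 3) := by
  classical
  have : NeZero n := ⟨by omega⟩
  have hv1 : ∀ i : ZMod n, (i+1).val = if i.val = n - 1 then 0 else i.val + 1 := by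
    intro i
    have hlt := ZMod.val_lt i
    rw [ZMod.val_add, ZMod.val_one'' (by omega)]
    split_ifs with h
    · rw [h, Nat.sub_add_cancel (by omega), Nat.mod_self]
    · exact Nat.mod_eq_of_lt (by omega)
  let S : ZMod n → Prop := fun i => i.val % 3 = 1 ∨ (n % 3 = 1 ∧ i.val = n - 1)
  have hS1 : ∀ i, S i → ¬ S (i+1) := by
    intro i h h'
    have hlt := ZMod.val_lt i
    have e := hv1 i
    simp only [S] at h h'
    split_ifs at e <;> omega
  have hS2 : ∀ i, S i ∨ S (i+1) ∨ S (i+1+1) := by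
    intro i
    have hlt := ZMod.val_lt i
    simp only [S, hv1]
    split_ifs <;> omega
  have hne : ∀ i : ZMod n, i ≠ i + 1 := by
    intro i h
    have h1 := hv1 i
    have hlt := ZMod.val_lt i
    rw [← h] at h1
    split_ifs at h1 <;> omega
  let U : ZMod n → Prop := fun i => S i ∨ S (i-1)
  have hU : ∀ i, U i ∨ U (i+1) := by
    intro i
    have := hS2 (i-1)
    simp only [sub_add_cancel] at this
    simp only [U, add_sub_cancel_right]
    tauto
  -- pairs in petals
  let off : ZMod n → ℕ := fun i => if U i then 2 else 1
  have hoff : ∀ i, (U i ∧ off i = 2) ∨ (¬ U i ∧ U (i+1) ∧ off i = 1) := by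
    intro i
    have := hU i
    by_cases h : U i
    · left; simp [off, h]
    · right; simp [off, h]; tauto
  let R : FlowerVert n (4*k+3) → FlowerVert n (4*k+3) → Prop := fun v w =>
    (∃ i, S i ∧ v = Sum.inl i ∧ w = Sum.inl (i+1)) ∨
    (∃ (i : ZMod n) (x y : Fin (4*k+1)), x.val % 4 = off i ∧ y.val = x.val + 1 ∧
      v = Sum.inr (i, x) ∧ w = Sum.inr (i, y))
  let M : (flowerGraph n (4*k+3)).Subgraph :=
    { verts := {v | ∃ w, R v w ∨ R w v}
      Adj := fun v w => R v w ∨ R w v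
      adj_sub := by
        have : ∀ v w, R v w → (flowerGraph n (4*k+3)).Adj v w := by
          rintro v w (⟨i, hi, rfl, rfl⟩ | ⟨i, x, y, hx, hy, rfl, rfl⟩)
          · rw [flower_adj_uu]; exact ⟨hne i, Or.inl rfl⟩
          · rw [flower_adj_vv]; exact ⟨rfl, Or.inl hy⟩
        rintro v w (h | h)
        · exact this _ _ h
        · exact (this _ _ h).symm
      edge_vert := fun {v w} h => ⟨w, h⟩
      symm := ⟨fun v w h => h.symm⟩ }
  have hR1 : ∀ v w w', R v w → R v w' → w = w' := by
    rintro v w w' (⟨i, hi, rfl, rfl⟩ | ⟨i, x, y, hx, hy, rfl, rfl⟩)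
      (⟨i', hi', h1, rfl⟩ | ⟨i', x', y', hx', hy', h1, rfl⟩)
    · cases h1; rfl
    · cases h1
    · cases h1
    · cases h1
      have : y = y' := Fin.ext (by omega)
      rw [this]
  have hR2 : ∀ v w w', R w v → R w' v → w = w' := by
    rintro v w w' (⟨i, hi, rfl, rfl⟩ | ⟨i, x, y, hx, hy, rfl, rfl⟩)
      (⟨i', hi', rfl, h1⟩ | ⟨i', x', y', hx', hy', rfl, h1⟩)
    · rw [add_right_cancel (Sum.inl.inj h1)]
    · cases h1
    · cases h1
    · cases h1
      have : x = x' := Fin.ext (by omega)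
      rw [this]
  have hR3 : ∀ v w w', R v w → R w' v → False := by
    rintro v w w' (⟨i, hi, rfl, rfl⟩ | ⟨i, x, y, hx, hy, rfl, rfl⟩)
      (⟨i', hi', rfl, h1⟩ | ⟨i', x', y', hx', hy', rfl, h1⟩)
    · have := Sum.inl.inj h1
      subst this
      exact hS1 _ hi' hi
    · cases h1
    · cases h1
    · cases h1
      have := hoff i
      omega
  have hM : M.IsMatching := by
    rintro v ⟨w, hw⟩
    refine ⟨w, hw, ?_⟩
    rintro w' (h' : R v w' ∨ R w' v)
    rcases hw with h | h <;> rcases h' with h' | h'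
    · exact hR1 _ _ _ h' h
    · exact (hR3 _ _ _ h h').elim
    · exact (hR3 _ _ _ h' h).elim
    · exact hR2 _ _ _ h' h
  have hUM : ∀ i, U i → (Sum.inl i : FlowerVert n (4*k+3)) ∈ M.verts := by
    rintro i (h | h)
    · exact ⟨_, Or.inl (Or.inl ⟨i, h, rfl, rfl⟩)⟩
    · exact ⟨_, Or.inr (Or.inl ⟨i-1, h, rfl, by rw [sub_add_cancel]⟩)⟩
  have hVM : ∀ (i : ZMod n) (x : Fin (4*k+1)), x.val % 4 = off i → x.val + 1 < 4*k+1 →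
      (Sum.inr (i, x) : FlowerVert n (4*k+3)) ∈ M.verts := by
    intro i x hx h
    exact ⟨_, Or.inl (Or.inr ⟨i, x, ⟨x.val+1, h⟩, hx, rfl, rfl, rfl⟩)⟩
  have hVM' : ∀ (i : ZMod n) (x : Fin (4*k+1)), x.val % 4 = off i + 1 →
      (Sum.inr (i, x) : FlowerVert n (4*k+3)) ∈ M.verts := by
    intro i x hx
    have := hoff i
    have hx2 := x.2
    exact ⟨_, Or.inr (Or.inr ⟨i, ⟨x.val-1, by omega⟩, x, by simp only; omega, by simp only; omega, rfl, rfl⟩)⟩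
  refine ⟨M.verts, ⟨?_, M, rfl, hM⟩, ?_⟩
  · rintro (i | ⟨i, x⟩) hv
    · rcases hU i with h | h
      · exact absurd (hUM i h) hv
      · refine ⟨_, hUM _ h, ?_⟩
        rw [flower_adj_uu]
        exact ⟨(hne i).symm, Or.inr rfl⟩
    · have hx2 : x.val < 4*k+1 := x.2
      rcases hoff i with ⟨h, ho⟩ | ⟨h, h', ho⟩
      · by_cases h0 : x.val = 0
        · exact ⟨_, hUM _ h, (flower_adj_uv _ _ _).2 (Or.inl ⟨rfl, h0⟩)⟩
        · by_cases h1 : x.val % 4 = 1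
          · exact ⟨_, hVM i ⟨x.val+1, by omega⟩ (by simp only; omega) (by simp only; omega),
              (flower_adj_vv _ _ _ _).2 ⟨rfl, Or.inr rfl⟩⟩
          · by_cases h2 : x.val % 4 = 2
            · exact absurd (hVM i x (by omega) (by omega)) hv
            · by_cases h3 : x.val % 4 = 3
              · exact absurd (hVM' i x (by omega)) hv
              · exact ⟨_, hVM' i ⟨x.val-1, by omega⟩ (by simp only; omega),
                  (flower_adj_vv _ _ _ _).2 ⟨rfl, Or.inl (by simp only; omega)⟩⟩
      · by_cases h0 : x.val = 4*k
        · exact ⟨_, hUM _ h', (flower_adj_uv _ _ _).2 (Or.inr ⟨rfl, h0⟩)⟩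
        · by_cases h1 : x.val % 4 = 0
          · exact ⟨_, hVM i ⟨x.val+1, by omega⟩ (by simp only; omega) (by simp only; omega),
              (flower_adj_vv _ _ _ _).2 ⟨rfl, Or.inr rfl⟩⟩
          · by_cases h2 : x.val % 4 = 1
            · exact absurd (hVM i x (by omega) (by omega)) hv
            · by_cases h3 : x.val % 4 = 2
              · exact absurd (hVM' i x (by omega)) hv
              · exact ⟨_, hVM' i ⟨x.val-1, by omega⟩ (by simp only; omega),
                  (flower_adj_vv _ _ _ _).2 ⟨rfl, Or.inl (by simp only; omega)⟩⟩
  · let s : Fin ((n+2)/3) → ZMod n := fun t =>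
      if 3 * t.val + 1 < n then ((3 * t.val + 1 : ℕ) : ZMod n) else ((n - 1 : ℕ) : ZMod n)
    have hs : ∀ i, S i → ∃ t, s t = i := by
      intro i hi
      have hlt := ZMod.val_lt i
      refine ⟨⟨i.val / 3, by omega⟩, ?_⟩
      simp only [s]
      have hi' : i.val % 3 = 1 ∨ (n % 3 = 1 ∧ i.val = n - 1) := hi
      split_ifs with hc
      · have : 3 * (i.val / 3) + 1 = i.val := by omega
        rw [this, ZMod.natCast_zmod_val]
      · have : n - 1 = i.val := by omega
        rw [this, ZMod.natCast_zmod_val]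
    let g : (Fin ((n+2)/3) ⊕ ZMod n × Fin k) × Fin 2 → FlowerVert n (4*k+3) := fun p =>
      match p.1 with
      | Sum.inl t => Sum.inl (s t + (p.2.val : ZMod n))
      | Sum.inr (i, t) => Sum.inr (i, (Fin.ofNat (4*k+1) (4 * t.val + off i + p.2.val)))
    have hR : ∀ v w, R v w → v ∈ Set.range g ∧ w ∈ Set.range g := by
      rintro v w (⟨i, hi, rfl, rfl⟩ | ⟨i, x, y, hx, hy, rfl, rfl⟩)
      · obtain ⟨t, rfl⟩ := hs i hi
        exact ⟨⟨(Sum.inl t, 0), by simp [g]⟩, ⟨(Sum.inl t, 1), by simp [g]⟩⟩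
      · have ho := hoff i
        have hy2 := y.2
        have hx2 := x.2
        have hq : x.val / 4 < k := by omega
        refine ⟨⟨(Sum.inr (i, ⟨x.val/4, hq⟩), 0), ?_⟩, ⟨(Sum.inr (i, ⟨x.val/4, hq⟩), 1), ?_⟩⟩
        · have : Fin.ofNat (4*k+1) (4 * (x.val/4) + off i + (0 : Fin 2).val) = x := by
            apply Fin.ext
            have : 4 * (x.val/4) + off i + (0 : Fin 2).val = x.val := by simp; omega
            rw [this]
            exact Nat.mod_eq_of_lt hx2
          simp only [g]
          rw [this]
        · have : Fin.ofNat (4*k+1) (4 * (x.val/4) + off i + (1 : Fin 2).val) = y := by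
            apply Fin.ext
            have : 4 * (x.val/4) + off i + (1 : Fin 2).val = y.val := by simp; omega
            rw [this]
            exact Nat.mod_eq_of_lt hy2
          simp only [g]
          rw [this]
    have hsub : M.verts ⊆ Set.range g := by
      rintro v ⟨w, h | h⟩
      · exact (hR _ _ h).1
      · exact (hR _ _ h).2
    have h1 := Set.ncard_le_ncard hsub (Set.toFinite _)
    have h2 : (Set.range g).ncard ≤ Nat.card ((Fin ((n+2)/3) ⊕ ZMod n × Fin k) × Fin 2) := by
      rw [← Set.image_univ, ← Set.ncard_univ]
      exact Set.ncard_image_le (Set.toFinite _)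
    simp only [Nat.card_eq_fintype_card, Fintype.card_prod, Fintype.card_sum, Fintype.card_fin,
      ZMod.card] at h2
    refine (h1.trans h2).trans (le_of_eq ?_)
    ring

theorem flower_pairedDomNum_mod4_3 (n m : ℕ) (hn : 3 ≤ n) (hm : 3 ≤ m) (h : m % 4 = 3) :
    (pairedDomNum (flowerGraph n m) : ℤ) = 2 * ⌈(3 * (n : ℚ) * m - 5 * n) / 12⌉ := by
  obtain ⟨k, rfl⟩ : ∃ k, m = 4 * k + 3 := ⟨m / 4, by omega⟩
  have h1 : pairedDomNum (flowerGraph n (4*k+3)) = 2 * (k * n + (n + 2) / 3) := by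
    obtain ⟨D, hD, hc⟩ := flower_upper (k := k) hn
    apply le_antisymm
    · refine le_trans (Nat.sInf_le ?_) hc
      exact ⟨D, hD, rfl⟩
    · refine le_csInf ⟨D.ncard, D, hD, rfl⟩ ?_
      rintro c ⟨D', hD', rfl⟩
      exact flower_lower hn D' hD'
  have h2 : ⌈(3 * (n : ℚ) * ((4 * k + 3 : ℕ) : ℚ) - 5 * n) / 12⌉
      = ((k * n + (n + 2) / 3 : ℕ) : ℤ) := by
    have e : (3 * (n : ℚ) * ((4 * k + 3 : ℕ) : ℚ) - 5 * n) / 12 = k * n + n / 3 := by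
      push_cast; ring
    rw [e, Int.ceil_eq_iff]
    have l1 : n ≤ 3 * ((n + 2) / 3) := by omega
    have l2 : 3 * ((n + 2) / 3) < n + 3 := by omega
    generalize (n + 2) / 3 = c at l1 l2
    have l1' : (n : ℚ) ≤ 3 * c := by exact_mod_cast l1
    have l2' : (3 * c : ℚ) < n + 3 := by exact_mod_cast l2
    push_cast
    constructor <;> linarith
  rw [h1, h2]
  push_cast
  ring
end

section
/- If m ≡ 3 (mod 6) and m, n ≥ 3, then γ_p^2(f_{n×m}) = 2·⌈(5nm - 9n)/30⌉. -/
/-- Targets spaced six apart need distinct edges. -/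
lemma fl_count (A : Finset ℕ) (c K : ℕ)
    (h : ∀ j < K, ∃ p ∈ A, p ≤ c + 6 * j + 2 ∧ c + 6 * j ≤ p + 3) : K ≤ A.card := by
  choose! f hf using h
  have : (Finset.range K).card ≤ A.card := by
    apply Finset.card_le_card_of_injOn f
    · intro j hj
      exact (hf j (by simpa using hj)).1
    · intro i hi j hj hij
      have h1 := hf i (by simpa using hi)
      have h2 := hf j (by simpa using hj)
      rw [hij] at h1
      omega
  simpa using this

def flNear (n : ℕ) (l l' : ZMod n) : Prop := ∃ d : ℤ, -2 ≤ d ∧ d ≤ 2 ∧ l' = l + (d : ZMod n)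

lemma fl_lower_comb (n k : ℕ) [NeZero n] (E : Finset (ZMod n × ℕ))
    (hcov : ∀ (l : ZMod n) (x : ℕ), 1 ≤ x → x ≤ 6 * k + 1 →
      (∃ p, (l, p) ∈ E ∧ p ≤ x + 2 ∧ x ≤ p + 3) ∨
      ((x ≤ 2 ∨ 6 * k ≤ x) ∧ ∃ l' p', flNear n l l' ∧ (l', p') ∈ E ∧ (p' ≤ 1 ∨ 6 * k ≤ p'))) :
    5 * (n * k) + n ≤ 5 * E.card := by
  classical
  let A : ZMod n → Finset ℕ := fun l => (E.filter (fun e => e.1 = l)).image Prod.snd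
  have hA : ∀ l p, p ∈ A l ↔ (l, p) ∈ E := by
    intro l p
    simp [A]
  have hsum : ∑ l, (A l).card = E.card := by
    rw [Finset.card_eq_sum_card_fiberwise (f := Prod.fst) (t := Finset.univ) (by simp)]
    apply Finset.sum_congr rfl
    intro l _
    apply Finset.card_image_of_injOn
    rintro ⟨a, b⟩ h1 ⟨c, d⟩ h2 h
    simp at h1 h2 h
    simp [h1.2, h2.2, h]
  have hk : ∀ l, k ≤ (A l).card := by
    intro l
    apply fl_count _ 4
    intro j hj
    rcases hcov l (4 + 6 * j) (by omega) (by omega) with ⟨p, h1, h2⟩ | ⟨h1, _⟩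
    · exact ⟨p, (hA _ _).2 h1, h2⟩
    · omega
  have hb : ∀ l p, (l, p) ∈ E → (p ≤ 1 ∨ 6 * k ≤ p) → k + 1 ≤ (A l).card := by
    intro l p hp hbd
    have hpA := (hA l p).2 hp
    have : k ≤ ((A l).erase p).card := by
      rcases hbd with hbd | hbd
      · apply fl_count _ 5
        intro j hj
        rcases hcov l (5 + 6 * j) (by omega) (by omega) with ⟨q, h1, h2⟩ | ⟨h1, _⟩
        · exact ⟨q, Finset.mem_erase.2 ⟨by omega, (hA _ _).2 h1⟩, h2⟩
        · omega
      · apply fl_count _ 3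
        intro j hj
        rcases hcov l (3 + 6 * j) (by omega) (by omega) with ⟨q, h1, h2⟩ | ⟨h1, _⟩
        · exact ⟨q, Finset.mem_erase.2 ⟨by omega, (hA _ _).2 h1⟩, h2⟩
        · omega
    rw [Finset.card_erase_of_mem hpA] at this
    have := Finset.card_pos.2 ⟨p, hpA⟩
    omega
  have hnear : ∀ l, ∃ l', flNear n l l' ∧ k + 1 ≤ (A l').card := by
    intro l
    by_contra hcon
    push Not at hcon
    have h0 : (A l).card < k + 1 := hcon l ⟨0, by simp⟩
    have : k + 1 ≤ (A l).card := by
      apply fl_count _ 1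
      intro j hj
      rcases hcov l (1 + 6 * j) (by omega) (by omega) with ⟨p, h1, h2⟩ | ⟨_, l', p', h1, h2, h3⟩
      · exact ⟨p, (hA _ _).2 h1, h2⟩
      · have := hcon l' h1
        have := hb l' p' h2 h3
        omega
    omega
  let B : Finset (ZMod n) := Finset.univ.filter (fun l => k + 1 ≤ (A l).card)
  have hB : n ≤ 5 * B.card := by
    have hsub : (Finset.univ : Finset (ZMod n)) ⊆
        (B ×ˢ Finset.Icc (-2 : ℤ) 2).image (fun q => q.1 - (q.2 : ZMod n)) := by
      intro l _
      obtain ⟨l', ⟨d, h1, h2, h3⟩, h4⟩ := hnear l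
      refine Finset.mem_image.2 ⟨(l', d), ?_, ?_⟩
      · simp only [B, Finset.mem_product, Finset.mem_filter, Finset.mem_Icc]
        exact ⟨⟨Finset.mem_univ _, h4⟩, h1, h2⟩
      · simp [h3]
    have := (Finset.card_le_card hsub).trans Finset.card_image_le
    rw [Finset.card_univ, ZMod.card, Finset.card_product] at this
    simp at this
    omega
  have hS : n * k + B.card ≤ ∑ l, (A l).card := by
    have : ∑ l : ZMod n, (k + if k + 1 ≤ (A l).card then 1 else 0) ≤ ∑ l, (A l).card := by
      apply Finset.sum_le_sum
      intro l _
      have := hk l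
      split_ifs <;> omega
    rw [Finset.sum_add_distrib] at this
    simpa [B, ZMod.card] using this
  omega

/-- `w` is an endpoint of the `p`-th edge of the `l`-th cycle. -/
def flInc (n k : ℕ) (l : ZMod n) (p : ℕ) : FlowerVert n (6 * k + 3) → Prop
  | Sum.inl i => (p = 0 ∧ i = l) ∨ (p = 6 * k + 1 ∧ i = l + 1) ∨
      (p = 6 * k + 2 ∧ (i = l ∨ i = l + 1))
  | Sum.inr (i, x) => i = l ∧ (x.val + 1 = p ∨ x.val = p)

lemma fl_edge_loc (n k : ℕ) (a b : FlowerVert n (6 * k + 3))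
    (h : (flowerGraph n (6 * k + 3)).Adj a b) :
    ∃ l p, flInc n k l p a ∧ flInc n k l p b := by
  have key : ∀ a b, flowerRel n (6 * k + 3) a b → ∃ l p, flInc n k l p a ∧ flInc n k l p b := by
    rintro (i | ⟨i, x⟩) (i' | ⟨i', x'⟩) h
    · exact ⟨i, 6 * k + 2, by simp [flInc], by simp only [flowerRel] at h; simp [flInc, h]⟩
    · rcases h with ⟨rfl, h⟩ | ⟨rfl, h⟩
      · exact ⟨i', 0, by simp [flInc], by simp [flInc, h]⟩
      · exact ⟨i', 6 * k + 1, by simp [flInc], by simp [flInc]; omega⟩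
    · exact h.elim
    · obtain ⟨rfl, h⟩ := h
      exact ⟨i', x.val + 1, by simp [flInc], by simp [flInc, h]⟩
  rw [flowerGraph, SimpleGraph.fromRel_adj] at h
  rcases h.2 with h | h
  · exact key _ _ h
  · obtain ⟨l, p, h1, h2⟩ := key _ _ h
    exact ⟨l, p, h2, h1⟩

lemma fl_edist {V : Type*} (G : SimpleGraph V) (u v : V) (h : G.edist u v ≤ 2) :
    u = v ∨ G.Adj u v ∨ ∃ w, G.Adj u w ∧ G.Adj w v := by
  have hne : G.edist u v ≠ ⊤ := ne_top_of_le_ne_top (by decide) h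
  obtain ⟨p, hp⟩ := SimpleGraph.exists_walk_of_edist_ne_top hne
  rw [← hp] at h
  have hlen : p.length ≤ 2 := by exact_mod_cast h
  cases p with
  | nil => left; rfl
  | cons h1 q =>
    cases q with
    | nil => right; left; exact h1
    | cons h2 r =>
      cases r with
      | nil => right; right; exact ⟨_, h1, h2⟩
      | cons h3 s => simp at hlen

lemma fl_edist_two {V : Type*} (G : SimpleGraph V) (u w v : V) (h : G.Adj u w) (h' : G.Adj w v) :
    G.edist u v ≤ 2 := by
  simpa using SimpleGraph.Walk.edist_le (.cons h (.cons h' .nil) : G.Walk u v)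

lemma fl_edist_one {V : Type*} (G : SimpleGraph V) (u v : V) (h : G.Adj u v) :
    G.edist u v ≤ 2 := by
  have : G.edist u v ≤ 1 := by
    simpa using SimpleGraph.Walk.edist_le (.cons h .nil : G.Walk u v)
  exact this.trans (by decide)

/-- Neighbours of a petal vertex. -/
lemma fl_adj_inr (n k : ℕ) (w : FlowerVert n (6 * k + 3)) (l : ZMod n) (x : Fin (6 * k + 3 - 2))
    (h : (flowerGraph n (6 * k + 3)).Adj w (Sum.inr (l, x))) :
    (∃ y : Fin (6 * k + 3 - 2), w = Sum.inr (l, y) ∧ (y.val = x.val + 1 ∨ x.val = y.val + 1)) ∨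
    (x.val = 0 ∧ w = Sum.inl l) ∨ (x.val = 6 * k ∧ w = Sum.inl (l + 1)) := by
  rw [flowerGraph, SimpleGraph.fromRel_adj] at h
  rcases w with i | ⟨i, y⟩
  · rcases h.2 with h | h
    · rcases h with ⟨rfl, h0⟩ | ⟨rfl, h0⟩
      · right; left; exact ⟨h0, rfl⟩
      · right; right; exact ⟨by omega, rfl⟩
    · exact h.elim
  · left
    rcases h.2 with ⟨rfl, h⟩ | ⟨rfl, h⟩
    · exact ⟨y, rfl, by omega⟩
    · exact ⟨y, rfl, by omega⟩

/-- Neighbours of a rim vertex. -/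
lemma fl_adj_inl (n k : ℕ) (w : FlowerVert n (6 * k + 3)) (l : ZMod n)
    (h : (flowerGraph n (6 * k + 3)).Adj w (Sum.inl l)) :
    w = Sum.inl (l + 1) ∨ w = Sum.inl (l - 1) ∨
    (∃ y : Fin (6 * k + 3 - 2), w = Sum.inr (l, y) ∧ y.val = 0) ∨
    (∃ y : Fin (6 * k + 3 - 2), w = Sum.inr (l - 1, y) ∧ y.val = 6 * k) := by
  rw [flowerGraph, SimpleGraph.fromRel_adj] at h
  rcases w with i | ⟨i, y⟩
  · rcases h.2 with h | h
    · simp only [flowerRel] at h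
      right; left; simp [h]
    · simp only [flowerRel] at h
      left; simp [h]
  · rcases h.2 with h | h
    · exact h.elim
    · rcases h with ⟨rfl, h0⟩ | ⟨rfl, h0⟩
      · exact Or.inr (Or.inr (Or.inl ⟨y, rfl, h0⟩))
      · exact Or.inr (Or.inr (Or.inr ⟨y, by simp, by omega⟩))

lemma fl_near (n k : ℕ) (w : FlowerVert n (6 * k + 3)) (l : ZMod n) (x : Fin (6 * k + 3 - 2))
    (h : (flowerGraph n (6 * k + 3)).edist w (Sum.inr (l, x)) ≤ 2) :
    (∃ y : Fin (6 * k + 3 - 2), w = Sum.inr (l, y) ∧ y.val ≤ x.val + 2 ∧ x.val ≤ y.val + 2) ∨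
    ((x.val ≤ 1 ∨ 6 * k ≤ x.val + 1) ∧
      ((∃ d : ℤ, -1 ≤ d ∧ d ≤ 2 ∧ w = Sum.inl (l + (d : ZMod n))) ∨
       (∃ y : Fin (6 * k + 3 - 2), w = Sum.inr (l - 1, y) ∧ y.val = 6 * k) ∨
       (∃ y : Fin (6 * k + 3 - 2), w = Sum.inr (l + 1, y) ∧ y.val = 0))) := by
  rcases fl_edist _ _ _ h with rfl | h | ⟨z, h1, h2⟩
  · left; exact ⟨x, rfl, by omega, by omega⟩
  · rcases fl_adj_inr n k _ _ _ h with ⟨y, rfl, h⟩ | ⟨h, rfl⟩ | ⟨h, rfl⟩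
    · left; exact ⟨y, rfl, by omega, by omega⟩
    · right; exact ⟨by omega, Or.inl ⟨0, by simp⟩⟩
    · right; exact ⟨by omega, Or.inl ⟨1, by simp⟩⟩
  · rcases fl_adj_inr n k _ _ _ h2 with ⟨y, rfl, h⟩ | ⟨h, rfl⟩ | ⟨h, rfl⟩
    · rcases fl_adj_inr n k _ _ _ h1 with ⟨y', rfl, h'⟩ | ⟨h', rfl⟩ | ⟨h', rfl⟩
      · left; exact ⟨y', rfl, by omega, by omega⟩
      · right; exact ⟨by omega, Or.inl ⟨0, by simp⟩⟩
      · right; exact ⟨by omega, Or.inl ⟨1, by simp⟩⟩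
    · rcases fl_adj_inl n k _ _ h1 with rfl | rfl | ⟨y, rfl, h'⟩ | ⟨y, rfl, h'⟩
      · right; exact ⟨by omega, Or.inl ⟨1, by simp⟩⟩
      · right; exact ⟨by omega, Or.inl ⟨-1, by simp [sub_eq_add_neg]⟩⟩
      · left; exact ⟨y, rfl, by omega, by omega⟩
      · right; exact ⟨by omega, Or.inr (Or.inl ⟨y, rfl, h'⟩)⟩
    · rcases fl_adj_inl n k _ _ h1 with rfl | rfl | ⟨y, rfl, h'⟩ | ⟨y, rfl, h'⟩
      · right; exact ⟨by omega, Or.inl ⟨2, by norm_num, by norm_num, by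
          congr 1; push_cast; ring⟩⟩
      · right; exact ⟨by omega, Or.inl ⟨0, by simp⟩⟩
      · right; exact ⟨by omega, Or.inr (Or.inr ⟨y, rfl, h'⟩)⟩
      · left; exact ⟨y, by simp, by omega, by omega⟩

lemma fl_lower (n k : ℕ) (hn : 3 ≤ n) (D : Set (FlowerVert n (6 * k + 3)))
    (hD : IsKDistPairedDominating (flowerGraph n (6 * k + 3)) 2 D) :
    ∃ e, 5 * (n * k) + n ≤ 5 * e ∧ 2 * e ≤ D.ncard := by
  classical
  have : NeZero n := ⟨by omega⟩
  obtain ⟨hdom, M, rfl, hM⟩ := hD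
  have hσ : ∀ v, ∃ w, v ∈ M.verts → M.Adj v w := by
    intro v
    by_cases hv : v ∈ M.verts
    · obtain ⟨w, hw, _⟩ := hM hv
      exact ⟨w, fun _ => hw⟩
    · exact ⟨v, fun h => absurd h hv⟩
  choose σ hσ using hσ
  have hσσ : ∀ v ∈ M.verts, σ (σ v) = v := by
    intro v hv
    have h1 := hσ v hv
    have hv' : σ v ∈ M.verts := M.edge_vert h1.symm
    obtain ⟨w, _, hw⟩ := hM hv'
    rw [hw _ (hσ _ hv'), hw _ h1.symm]
  have hloc : ∀ s : Sym2 (FlowerVert n (6 * k + 3)), ∃ e : ZMod n × ℕ,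
      s ∈ (flowerGraph n (6 * k + 3)).edgeSet → ∀ w ∈ s, flInc n k e.1 e.2 w := by
    intro s
    induction s using Sym2.ind with
    | _ a b =>
      by_cases h : (flowerGraph n (6 * k + 3)).Adj a b
      · obtain ⟨l, p, h1, h2⟩ := fl_edge_loc n k a b h
        refine ⟨(l, p), fun _ w hw => ?_⟩
        rcases Sym2.mem_iff.1 hw with rfl | rfl
        · exact h1
        · exact h2
      · exact ⟨(0, 0), fun h' => absurd h' h⟩
  choose loc hloc using hloc
  let D' := M.verts.toFinset
  let f : FlowerVert n (6 * k + 3) → ZMod n × ℕ := fun v => loc s(v, σ v)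
  let E := D'.image f
  have hE : ∀ w ∈ M.verts, ∃ l p, (l, p) ∈ E ∧ flInc n k l p w := by
    intro w hw
    refine ⟨(f w).1, (f w).2, Finset.mem_image.2 ⟨w, by simpa [D'] using hw, rfl⟩, ?_⟩
    exact hloc s(w, σ w) (M.adj_sub (hσ w hw)) w (by simp)
  refine ⟨E.card, ?_, ?_⟩
  · apply fl_lower_comb
    intro l x hx1 hx2
    let x' : Fin (6 * k + 3 - 2) := ⟨x - 1, by omega⟩
    have hx' : x'.val = x - 1 := rfl
    have hw : ∃ w ∈ M.verts, (flowerGraph n (6 * k + 3)).edist w (Sum.inr (l, x')) ≤ 2 := by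
      by_cases hv : (Sum.inr (l, x') : FlowerVert n (6 * k + 3)) ∈ M.verts
      · exact ⟨_, hv, by simp⟩
      · exact hdom _ hv
    obtain ⟨w, hw, hdist⟩ := hw
    obtain ⟨l', p, hE', hinc⟩ := hE w hw
    rcases fl_near n k w l x' hdist with ⟨y, rfl, h1, h2⟩ |
      ⟨hx, ⟨d, hd1, hd2, rfl⟩ | ⟨y, rfl, hy⟩ | ⟨y, rfl, hy⟩⟩
    · obtain ⟨rfl, h⟩ := hinc
      left
      exact ⟨p, hE', by omega, by omega⟩
    · right
      refine ⟨by omega, l', p, ?_, hE', ?_⟩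
      · have hc : l' = l + (d : ZMod n) ∨ l' = l + ((d - 1 : ℤ) : ZMod n) := by
          simp only [flInc] at hinc
          rcases hinc with ⟨_, h⟩ | ⟨_, h⟩ | ⟨_, h | h⟩
          · left; exact h.symm
          · right; push_cast; rw [← add_sub_assoc, h]; ring
          · left; exact h.symm
          · right; push_cast; rw [← add_sub_assoc, h]; ring
        rcases hc with h | h
        · exact ⟨d, by omega, by omega, h⟩
        · exact ⟨d - 1, by omega, by omega, h⟩
      · rcases hinc with ⟨h, _⟩ | ⟨h, _⟩ | ⟨h, _⟩ <;> omega
    · right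
      obtain ⟨rfl, h⟩ := hinc
      exact ⟨by omega, _, p, ⟨-1, by norm_num, by norm_num, by simp [sub_eq_add_neg]⟩, hE', by omega⟩
    · right
      obtain ⟨rfl, h⟩ := hinc
      exact ⟨by omega, _, p, ⟨1, by norm_num, by norm_num, by simp⟩, hE', by omega⟩
  · rw [Set.ncard_eq_toFinset_card']
    apply Finset.mul_card_image_le_card
    intro e he
    obtain ⟨v, hv, rfl⟩ := Finset.mem_image.1 he
    have hv : v ∈ M.verts := by simpa [D'] using hv
    have hadj := hσ v hv
    have hne : v ≠ σ v := (M.adj_sub hadj).ne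
    rw [← Finset.card_pair hne]
    apply Finset.card_le_card
    intro w hw
    rcases Finset.mem_insert.1 hw with rfl | hw
    · simp [D', hv]
    · rw [Finset.mem_singleton.1 hw]
      have : σ v ∈ M.verts := M.edge_vert hadj.symm
      simp [D', this, f, hσσ v hv, Sym2.eq_swap]

lemma fl_matching {V ι : Type*} [Fintype ι] (G : SimpleGraph V) (f : ι × Bool → V)
    (hf : Function.Injective f) (h : ∀ i, G.Adj (f (i, false)) (f (i, true))) :
    (∃ M : G.Subgraph, M.verts = Set.range f ∧ M.IsMatching) ∧
    (Set.range f).ncard = 2 * Fintype.card ι := by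
  constructor
  · refine ⟨{ verts := Set.range f
              Adj := fun a b => ∃ i c, a = f (i, c) ∧ b = f (i, !c)
              adj_sub := ?_
              edge_vert := ?_
              symm := ?_ }, rfl, ?_⟩
    · rintro a b ⟨i, c, rfl, rfl⟩
      cases c
      · exact h i
      · exact (h i).symm
    · rintro a b ⟨i, c, rfl, rfl⟩
      exact ⟨_, rfl⟩
    · refine ⟨?_⟩
      rintro a b ⟨i, c, rfl, rfl⟩
      exact ⟨i, !c, rfl, by simp⟩
    · rintro _ ⟨⟨i, c⟩, rfl⟩
      refine ⟨f (i, !c), ⟨i, c, rfl, rfl⟩, ?_⟩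
      rintro y ⟨i', c', h1, rfl⟩
      have := hf h1
      simp at this
      simp [this]
  · rw [← Set.image_univ, Set.ncard_image_of_injective _ hf, Set.ncard_univ]
    simp [mul_comm]

/-- Start of the `j`-th rim pair. -/
def flR (n j : ℕ) : ℕ := min (5 * j) (n - 2)

open Classical in
noncomputable def flShift (n : ℕ) (t : ZMod n) : ℕ :=
  if ∃ j < (n + 4) / 5, ((flR n j : ℕ) : ZMod n) = t + 2 then 1 else 0

lemma flShift_le (n : ℕ) (t : ZMod n) : flShift n t ≤ 1 := by
  unfold flShift; split_ifs <;> simp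

noncomputable def flF (n k : ℕ) :
    (Fin ((n + 4) / 5) ⊕ ZMod n × Fin k) × Bool → FlowerVert n (6 * k + 3)
  | (Sum.inl j, b) => Sum.inl ((flR n j.val + b.toNat : ℕ) : ZMod n)
  | (Sum.inr (t, j), b) => Sum.inr (t, ⟨6 * j.val + 3 - flShift n t + b.toNat, by
      have := j.2; have := b.toNat_le; omega⟩)

lemma flF_inj (n k : ℕ) (hn : 3 ≤ n) : Function.Injective (flF n k) := by
  rintro ⟨j | ⟨t, j⟩, b⟩ ⟨j' | ⟨t', j'⟩, b'⟩ h
  · simp only [flF, Sum.inl.injEq] at h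
    rw [ZMod.natCast_eq_natCast_iff'] at h
    have h1 := j.2
    have h2 := j'.2
    have h3 := b.toNat_le
    have h4 := b'.toNat_le
    unfold flR at h
    rw [Nat.mod_eq_of_lt (by omega), Nat.mod_eq_of_lt (by omega)] at h
    have : j.val = j'.val := by omega
    have hj : j = j' := Fin.ext this
    subst hj
    have : b.toNat = b'.toNat := by omega
    cases b <;> cases b' <;> simp_all
  · simp [flF] at h
  · simp [flF] at h
  · simp only [flF, Sum.inr.injEq, Prod.mk.injEq, Fin.mk.injEq] at h
    obtain ⟨rfl, h⟩ := h
    have h0 := flShift_le n t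
    have h3 := b.toNat_le
    have h4 := b'.toNat_le
    have hj : j = j' := Fin.ext (by omega)
    subst hj
    have : b.toNat = b'.toNat := by omega
    cases b <;> cases b' <;> simp_all

lemma fl_one_ne (n : ℕ) (hn : 3 ≤ n) : (1 : ZMod n) ≠ 0 := by
  have : Fact (1 < n) := ⟨by omega⟩
  exact one_ne_zero

lemma fl_adj_rim (n m : ℕ) (hn : 3 ≤ n) (i : ZMod n) :
    (flowerGraph n m).Adj (Sum.inl i) (Sum.inl (i + 1)) := by
  rw [flowerGraph, SimpleGraph.fromRel_adj]
  exact ⟨by simp [fl_one_ne n hn], Or.inl rfl⟩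

lemma fl_adj_first (n m : ℕ) (i : ZMod n) (x : Fin (m - 2)) (hx : x.val = 0) :
    (flowerGraph n m).Adj (Sum.inl i) (Sum.inr (i, x)) := by
  rw [flowerGraph, SimpleGraph.fromRel_adj]
  exact ⟨by simp, Or.inl (Or.inl ⟨rfl, hx⟩)⟩

lemma fl_adj_last (n m : ℕ) (i : ZMod n) (x : Fin (m - 2)) (hx : x.val = m - 3) :
    (flowerGraph n m).Adj (Sum.inl (i + 1)) (Sum.inr (i, x)) := by
  rw [flowerGraph, SimpleGraph.fromRel_adj]
  exact ⟨by simp, Or.inl (Or.inr ⟨rfl, hx⟩)⟩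

lemma fl_adj_petal (n m : ℕ) (i : ZMod n) (x y : Fin (m - 2)) (hx : y.val = x.val + 1) :
    (flowerGraph n m).Adj (Sum.inr (i, x)) (Sum.inr (i, y)) := by
  rw [flowerGraph, SimpleGraph.fromRel_adj]
  refine ⟨?_, Or.inl ⟨rfl, hx⟩⟩
  intro h
  simp only [Sum.inr.injEq, Prod.mk.injEq, true_and] at h
  rw [h] at hx
  omega

lemma fl_petal_dist (n m : ℕ) (i : ZMod n) (x y : Fin (m - 2)) (h1 : x.val ≤ y.val + 2)
    (h2 : y.val ≤ x.val + 2) :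
    (flowerGraph n m).edist (Sum.inr (i, x)) (Sum.inr (i, y)) ≤ 2 := by
  have key : ∀ x y : Fin (m - 2), x.val ≤ y.val → y.val ≤ x.val + 2 →
      (flowerGraph n m).edist (Sum.inr (i, x)) (Sum.inr (i, y)) ≤ 2 := by
    intro x y h1 h2
    have : y.val = x.val ∨ y.val = x.val + 1 ∨ y.val = x.val + 2 := by omega
    rcases this with h | h | h
    · rw [Fin.ext h]; simp
    · exact fl_edist_one _ _ _ (fl_adj_petal n m i x y h)
    · have := y.2
      exact fl_edist_two _ _ _ _ (fl_adj_petal n m i x ⟨x.val + 1, by omega⟩ rfl)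
        (fl_adj_petal n m i _ y h)
  rcases le_total x.val y.val with h | h
  · exact key x y h h2
  · rw [SimpleGraph.edist_comm]; exact key y x h h1

/-- Every index is within two of the start of a rim pair. -/
lemma fl_rim_cover (n : ℕ) (hn : 3 ≤ n) (t : ZMod n) :
    ∃ j < (n + 4) / 5, ∃ d : ℤ, -2 ≤ d ∧ d ≤ 2 ∧ ((flR n j : ℕ) : ZMod n) = t + (d : ZMod n) := by
  have : NeZero n := ⟨by omega⟩
  have ht := ZMod.val_lt t
  have hc : ((t.val : ℕ) : ZMod n) = t := ZMod.natCast_zmod_val t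
  by_cases hj : (t.val + 2) / 5 < (n + 4) / 5
  · refine ⟨(t.val + 2) / 5, hj, (flR n ((t.val + 2) / 5) : ℤ) - t.val, ?_, ?_, ?_⟩
    · unfold flR; omega
    · unfold flR; omega
    · push_cast; rw [hc]; ring
  · refine ⟨0, by omega, (n : ℤ) - t.val, by omega, by omega, ?_⟩
    push_cast; rw [hc]; simp [flR]

lemma fl_dom (n k : ℕ) (hn : 3 ≤ n) (v : FlowerVert n (6 * k + 3)) :
    ∃ u ∈ Set.range (flF n k), (flowerGraph n (6 * k + 3)).edist u v ≤ 2 := by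
  have hrim : ∀ j < (n + 4) / 5, ∀ s : ZMod n, ((flR n j : ℕ) : ZMod n) = s →
      Sum.inl s ∈ Set.range (flF n k) ∧ Sum.inl (s + 1) ∈ Set.range (flF n k) := by
    rintro j hj s rfl
    exact ⟨⟨(Sum.inl ⟨j, hj⟩, false), by simp [flF]⟩, ⟨(Sum.inl ⟨j, hj⟩, true), by simp [flF]⟩⟩
  have adjR : ∀ a b : ZMod n, b = a + 1 →
      (flowerGraph n (6 * k + 3)).Adj (Sum.inl a) (Sum.inl b) := by
    rintro a b rfl; exact fl_adj_rim n _ hn a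
  rcases v with i | ⟨t, x⟩
  · obtain ⟨j, hj, d, hd1, hd2, hd⟩ := fl_rim_cover n hn i
    obtain ⟨h1, h2⟩ := hrim j hj _ hd
    refine ⟨_, h1, ?_⟩
    have : d = -2 ∨ d = -1 ∨ d = 0 ∨ d = 1 ∨ d = 2 := by omega
    rcases this with rfl | rfl | rfl | rfl | rfl
    · exact fl_edist_two _ _ _ _ (adjR _ (i - 1) (by push_cast; ring)) (adjR _ _ (by ring))
    · exact fl_edist_one _ _ _ (adjR _ _ (by push_cast; ring))
    · simp
    · exact fl_edist_one _ _ _ (adjR _ _ (by push_cast; ring)).symm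
    · exact fl_edist_two _ _ _ _ (adjR (i + 1) _ (by push_cast; ring)).symm (adjR _ _ (by ring)).symm
  · have hx := x.2
    by_cases hs : ∃ j < (n + 4) / 5, ((flR n j : ℕ) : ZMod n) = t + 2
    · have hsh : flShift n t = 1 := by unfold flShift; rw [if_pos hs]
      by_cases hlast : x.val = 6 * k
      · obtain ⟨j, hj, hd⟩ := hs
        refine ⟨_, (hrim j hj _ hd).1, ?_⟩
        exact fl_edist_two _ _ _ _ (adjR (t + 1) _ (by ring)).symm
          (fl_adj_last n _ t x (by omega))
      · have hjk : x.val / 6 < k := by omega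
        by_cases hb : x.val % 6 ≤ 2
        · refine ⟨_, ⟨(Sum.inr (t, ⟨x.val / 6, hjk⟩), false), rfl⟩, ?_⟩
          apply fl_petal_dist <;> simp [hsh] <;> omega
        · refine ⟨_, ⟨(Sum.inr (t, ⟨x.val / 6, hjk⟩), true), rfl⟩, ?_⟩
          apply fl_petal_dist <;> simp [hsh] <;> omega
    · have hsh : flShift n t = 0 := by unfold flShift; rw [if_neg hs]
      by_cases hfirst : x.val = 0
      · obtain ⟨j, hj, d, hd1, hd2, hd⟩ := fl_rim_cover n hn t
        obtain ⟨h1, h2⟩ := hrim j hj _ hd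
        have : d = -2 ∨ d = -1 ∨ d = 0 ∨ d = 1 ∨ d = 2 := by omega
        have hf := fl_adj_first n (6 * k + 3) t x hfirst
        rcases this with rfl | rfl | rfl | rfl | rfl
        · exact ⟨_, h2, fl_edist_two _ _ _ _ (adjR _ _ (by push_cast; ring)) hf⟩
        · exact ⟨_, h1, fl_edist_two _ _ _ _ (adjR _ _ (by push_cast; ring)) hf⟩
        · exact ⟨_, h1, fl_edist_one _ _ _ (by simpa using hf)⟩
        · exact ⟨_, h1, fl_edist_two _ _ _ _ (adjR _ _ (by push_cast; ring)).symm hf⟩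
        · exact absurd ⟨j, hj, by simpa using hd⟩ hs
      · have hjk : (x.val - 1) / 6 < k := by omega
        by_cases hb : (x.val - 1) % 6 ≤ 2
        · refine ⟨_, ⟨(Sum.inr (t, ⟨(x.val - 1) / 6, hjk⟩), false), rfl⟩, ?_⟩
          apply fl_petal_dist <;> simp [hsh] <;> omega
        · refine ⟨_, ⟨(Sum.inr (t, ⟨(x.val - 1) / 6, hjk⟩), true), rfl⟩, ?_⟩
          apply fl_petal_dist <;> simp [hsh] <;> omega

lemma fl_upper (n k : ℕ) (hn : 3 ≤ n) :
    ∃ D, IsKDistPairedDominating (flowerGraph n (6 * k + 3)) 2 D ∧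
      D.ncard = 2 * ((n + 4) / 5 + n * k) := by
  have : NeZero n := ⟨by omega⟩
  have hm := fl_matching (flowerGraph n (6 * k + 3)) (flF n k) (flF_inj n k hn) (by
    rintro (j | ⟨t, j⟩)
    · simpa [flF] using fl_adj_rim n (6 * k + 3) hn ((flR n j.val : ℕ) : ZMod n)
    · exact fl_adj_petal _ _ _ _ _ (by simp))
  refine ⟨Set.range (flF n k), ⟨fun v _ => fl_dom n k hn v, hm.1⟩, ?_⟩
  rw [hm.2]
  simp [ZMod.card]

theorem flower_twoDistPairedDomNum_mod6_3 (n m : ℕ) (hn : 3 ≤ n) (hm : 3 ≤ m)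
    (h : m % 6 = 3) :
    (kDistPairedDomNum (flowerGraph n m) 2 : ℤ) = 2 * ⌈(5 * (n : ℚ) * m - 9 * n) / 30⌉ := by
  obtain ⟨k, rfl⟩ : ∃ k, m = 6 * k + 3 := ⟨m / 6, by omega⟩
  have hnum : kDistPairedDomNum (flowerGraph n (6 * k + 3)) 2 = 2 * ((n + 4) / 5 + n * k) := by
    have hup := fl_upper n k hn
    apply le_antisymm
    · exact Nat.sInf_le hup
    · obtain ⟨D, hD, hc⟩ := Nat.sInf_mem (s := {c | ∃ D,
        IsKDistPairedDominating (flowerGraph n (6 * k + 3)) 2 D ∧ D.ncard = c}) ⟨_, hup⟩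
      rw [kDistPairedDomNum, ← hc]
      obtain ⟨e, h1, h2⟩ := fl_lower n k hn D hD
      omega
  have hceil : ⌈(5 * (n : ℚ) * ((6 * k + 3 : ℕ) : ℚ) - 9 * n) / 30⌉ =
      (((n + 4) / 5 + n * k : ℕ) : ℤ) := by
    rw [Int.ceil_eq_iff]
    obtain ⟨q, hq⟩ : ∃ q, q = (n + 4) / 5 := ⟨_, rfl⟩
    rw [← hq]
    have h1 : n ≤ 5 * q := by omega
    have h2 : 5 * q < n + 5 := by omega
    have h1' : (n : ℚ) ≤ 5 * q := by exact_mod_cast h1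
    have h2' : (5 * q : ℚ) < n + 5 := by exact_mod_cast h2
    push_cast
    constructor <;> linarith
  rw [hnum, hceil]
  push_cast
  ring
end
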